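/- arXiv:2508.17147 — 3 statements merged into one kernel-verified Lean document; each statement's English description precedes it below -/
import Mathlib

section
/- Let Δ : ℤ → ℝ with Δ_j > 0 for all j (the length of the element [x_j, x_{j+1}]), and let u⁺, u⁻ : ℤ → ℝ be finitely supported sequences (u_j⁺ is the value at node j produced by the element [x_j, x_{j+1}], and u_j⁻ the value at node j produced by [x_{j−1}, x_j]). Define the projected nodal values u_j := (Δ_j u_j⁺ + Δ_{j−1} u_j⁻)/(Δ_j + Δ_{j−1}). Then Σ_{j∈ℤ} (Δ_j + Δ_{j−1}) u_j² ≤ Σ_{j∈ℤ} Δ_j ((u_j⁺)² + (u_{j+1}⁻)²); i.e. the averaging projection from the discontinuous dG nodal values to the continuous PAMPA nodal values is energy stable. -/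
/-- Energy stability of the averaging projection from the discontinuous dG nodal
values to the continuous PAMPA nodal values (Proposition 3.1):
with `u_j = (Δ_j u_j⁺ + Δ_{j−1} u_j⁻)/(Δ_j + Δ_{j−1})`,
`Σ_j (Δ_j + Δ_{j−1}) u_j² ≤ Σ_j Δ_j ((u_j⁺)² + (u_{j+1}⁻)²)`. -/
theorem pampa_projection_energy_stable
    (Δ : ℤ → ℝ) (hΔ : ∀ j, 0 < Δ j)
    (uplus uminus : ℤ → ℝ)
    (hplus : (Function.support uplus).Finite)
    (hminus : (Function.support uminus).Finite) :
    (∑' j : ℤ, (Δ j + Δ (j - 1)) *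
        ((Δ j * uplus j + Δ (j - 1) * uminus j) / (Δ j + Δ (j - 1)))^2) ≤
      ∑' j : ℤ, Δ j * ((uplus j)^2 + (uminus (j + 1))^2) := by
  have hA : Summable (fun j : ℤ => Δ j * (uplus j)^2) := by
    apply summable_of_hasFiniteSupport
    refine hplus.subset ?_
    intro j hj h0
    apply hj
    simp [h0]
  have hB : Summable (fun j : ℤ => Δ (j - 1) * (uminus j)^2) := by
    apply summable_of_hasFiniteSupport
    refine hminus.subset ?_
    intro j hj h0
    apply hj
    simp [h0]
  have hL : Summable (fun j : ℤ => (Δ j + Δ (j - 1)) *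
        ((Δ j * uplus j + Δ (j - 1) * uminus j) / (Δ j + Δ (j - 1)))^2) := by
    apply summable_of_hasFiniteSupport
    refine (hplus.union hminus).subset ?_
    intro j hj
    by_contra h
    simp only [Set.mem_union, Function.mem_support, not_or, not_not] at h
    apply hj
    simp [h.1, h.2]
  have hB' : Summable (fun j : ℤ => Δ j * (uminus (j + 1))^2) := by
    have := (Equiv.addRight (1 : ℤ)).summable_iff.mpr hB
    simpa [Function.comp_def] using this
  have hBe : ∑' j : ℤ, Δ j * (uminus (j + 1))^2 = ∑' j : ℤ, Δ (j - 1) * (uminus j)^2 := by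
    have := (Equiv.addRight (1 : ℤ)).tsum_eq (fun j : ℤ => Δ (j - 1) * (uminus j)^2)
    simpa using this
  have hR : ∑' j : ℤ, Δ j * ((uplus j)^2 + (uminus (j + 1))^2)
      = ∑' j : ℤ, (Δ j * (uplus j)^2 + Δ (j - 1) * (uminus j)^2) := by
    rw [hA.tsum_add hB, ← hBe, ← hA.tsum_add hB']
    simp only [mul_add]
  rw [hR]
  refine hL.tsum_le_tsum ?_ (hA.add hB)
  intro j
  have h1 := hΔ j
  have h2 := hΔ (j - 1)
  have h3 : 0 < Δ j + Δ (j - 1) := by positivity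
  have h4 : (Δ j + Δ (j - 1)) *
        ((Δ j * uplus j + Δ (j - 1) * uminus j) / (Δ j + Δ (j - 1)))^2
      = (Δ j * uplus j + Δ (j - 1) * uminus j)^2 / (Δ j + Δ (j - 1)) := by
    field_simp
  rw [h4, div_le_iff₀ h3]
  nlinarith [mul_nonneg (mul_pos h1 h2).le (sq_nonneg (uplus j - uminus j))]
end

section
/- Fix Δx > 0. For finitely supported sequences p, a : ℤ → ℝ (p_j ≈ point value at node x_j, a_j ≈ cell average on [x_j, x_{j+1}]), define the periodic PAMPA derivative operator D̃ by (D̃(p,a))_point at j = (p_{j−1} − 3a_{j−1} + 3a_j − p_{j+1})/Δx and (D̃(p,a))_average at j = (p_{j+1} − p_j)/Δx, and the diagonal mass weights Δx/4 at each point index and 3Δx/4 at each average index. Then the bilinear form B((p,a),(p′,a′)) := Σ_{j∈ℤ} [ (Δx/4)·(D̃(p,a))_point,j · p′_j + (3Δx/4)·(D̃(p,a))_avg,j · a′_j ] is skew-symmetric: B(w, w′) + B(w′, w) = 0 for all finitely supported w = (p,a), w′ = (p′,a′). In particular B(w,w) = 0, i.e. M̃D̃ + (M̃D̃)ᵀ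 = 0 (a periodic SBP operator). -/
/-- Point-value component of the periodic PAMPA derivative operator. -/
noncomputable def pampaDPoint (Δx : ℝ) (p a : ℤ → ℝ) (j : ℤ) : ℝ :=
  (p (j - 1) - 3 * a (j - 1) + 3 * a j - p (j + 1)) / Δx

/-- Average component of the periodic PAMPA derivative operator. -/
noncomputable def pampaDAvg (Δx : ℝ) (p : ℤ → ℝ) (j : ℤ) : ℝ :=
  (p (j + 1) - p j) / Δx

/-- The bilinear form `B((p,a),(p′,a′)) = Σ_j [ (Δx/4)·(D̃w)_point,j·p′_j
+ (3Δx/4)·(D̃w)_avg,j·a′_j ]` associated with `M̃ D̃`. -/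
noncomputable def pampaBilin (Δx : ℝ) (p a p' a' : ℤ → ℝ) : ℝ :=
  ∑' j : ℤ, ((Δx / 4) * pampaDPoint Δx p a j * p' j +
    (3 * Δx / 4) * pampaDAvg Δx p j * a' j)

/-- Summability of a function dominated by the support of a finitely supported one. -/
theorem pampa_summable_mul (f g : ℤ → ℝ) (hg : (Function.support g).Finite) :
    Summable (fun j => f j * g j) :=
  summable_of_hasFiniteSupport (hg.subset (Function.support_mul_subset_right f g))

theorem pampa_skew (Δx : ℝ) (hΔx : 0 < Δx)
    (p a p' a' : ℤ → ℝ)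
    (hp : (Function.support p).Finite) (ha : (Function.support a).Finite)
    (hp' : (Function.support p').Finite) (ha' : (Function.support a').Finite) :
    pampaBilin Δx p a p' a' + pampaBilin Δx p' a' p a = 0 := by
  have h1 := (pampa_summable_mul (fun j => (Δx / 4) * pampaDPoint Δx p a j) p' hp').add
    (pampa_summable_mul (fun j => (3 * Δx / 4) * pampaDAvg Δx p j) a' ha')
  have h2 := (pampa_summable_mul (fun j => (Δx / 4) * pampaDPoint Δx p' a' j) p hp).add
    (pampa_summable_mul (fun j => (3 * Δx / 4) * pampaDAvg Δx p' j) a ha)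
  let G : ℤ → ℝ := fun j => ((p (j - 1) - 3 * a (j - 1)) / 4) * p' j
    + ((p' (j - 1) - 3 * a' (j - 1)) / 4) * p j
  have hG : Summable G :=
    (pampa_summable_mul (fun j => (p (j - 1) - 3 * a (j - 1)) / 4) p' hp').add
      (pampa_summable_mul (fun j => (p' (j - 1) - 3 * a' (j - 1)) / 4) p hp)
  have hG1 : Summable (fun j => G (j + 1)) := (Equiv.addRight (1 : ℤ)).summable_iff.mpr hG
  have hs : ∑' j, G (j + 1) = ∑' j, G j := (Equiv.addRight (1 : ℤ)).tsum_eq G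
  unfold pampaBilin
  rw [← h1.tsum_add h2]
  have : ∑' j, (G j - G (j + 1)) = 0 := by rw [hG.tsum_sub hG1, hs, sub_self]
  rw [← this]
  refine tsum_congr fun j => ?_
  simp only [G, pampaDPoint, pampaDAvg, add_sub_cancel_right]
  field_simp
  ring

/-- The periodic PAMPA operator is a periodic SBP operator: the bilinear form of
`M̃ D̃` is skew-symmetric on finitely supported states, so `M̃D̃ + (M̃D̃)ᵀ = 0`;
in particular `B(w,w) = 0`. -/
theorem pampa_periodic_sbp (Δx : ℝ) (hΔx : 0 < Δx)
    (p a p' a' : ℤ → ℝ)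
    (hp : (Function.support p).Finite) (ha : (Function.support a).Finite)
    (hp' : (Function.support p').Finite) (ha' : (Function.support a').Finite) :
    pampaBilin Δx p a p' a' + pampaBilin Δx p' a' p a = 0 ∧
    pampaBilin Δx p a p a = 0 := by
  have h := pampa_skew Δx hΔx p a p a hp ha hp ha
  exact ⟨pampa_skew Δx hΔx p a p' a' hp ha hp' ha', by linarith⟩
end

section
/- Fix Δx > 0 and a uniform grid x_j = j·Δx (j ∈ ℤ). For every real polynomial q of degree at most 2 and every j ∈ ℤ, the central PAMPA point stencil is exact: (1/Δx)·( q(x_{j−1}) − 3·ā_{j−1} + 3·ā_j − q(x_{j+1}) ) = q′(x_j), where ā_j := (1/Δx)·∫_{x_j}^{x_{j+1}} q(x) dx is the exact cell average of q on [x_j, x_{j+1}]. -/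
open MeasureTheory Polynomial

/-- Exactness of the central PAMPA point stencil on quadratics: on a uniform grid
`x_j = j·Δx`, for every polynomial `q` of degree at most `2`,
`(1/Δx)·(q(x_{j−1}) − 3ā_{j−1} + 3ā_j − q(x_{j+1})) = q′(x_j)`,
where `ā_j` is the exact cell average of `q` on `[x_j, x_{j+1}]`. -/
theorem pampa_central_stencil_exact (Δx : ℝ) (hΔx : 0 < Δx)
    (q : Polynomial ℝ) (hq : q.degree ≤ 2) (j : ℤ) :
    (1 / Δx) * (q.eval ((j - 1 : ℤ) * Δx)
        - 3 * ((1 / Δx) * ∫ x in ((j - 1 : ℤ) * Δx)..((j : ℤ) * Δx), q.eval x)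
        + 3 * ((1 / Δx) * ∫ x in ((j : ℤ) * Δx)..((j + 1 : ℤ) * Δx), q.eval x)
        - q.eval ((j + 1 : ℤ) * Δx)) =
      (Polynomial.derivative q).eval ((j : ℤ) * Δx) := by
  obtain ⟨a, b, c, rfl⟩ : ∃ a b c : ℝ, q = C a * X ^ 2 + C b * X + C c :=
    ⟨_, _, _, Polynomial.eq_quadratic_of_degree_le_two hq⟩
  have key : ∀ s t : ℝ, (∫ x in s..t, (C a * X ^ 2 + C b * X + C c : ℝ[X]).eval x) =
      (a * t ^ 3 / 3 + b * t ^ 2 / 2 + c * t) - (a * s ^ 3 / 3 + b * s ^ 2 / 2 + c * s) := by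
    intro s t
    refine intervalIntegral.integral_eq_sub_of_hasDerivAt
      (f := fun t : ℝ => a * t ^ 3 / 3 + b * t ^ 2 / 2 + c * t) (fun x _ => ?_)
      ((Polynomial.continuous _).intervalIntegrable _ _)
    have h := ((((hasDerivAt_id x).pow 3).const_mul a).div_const 3).add
      ((((hasDerivAt_id x).pow 2).const_mul b).div_const 2) |>.add
      ((hasDerivAt_id x).const_mul c)
    convert h using 1
    · rfl
    · simp
      ring
  rw [key, key]
  have h0 : Δx ≠ 0 := hΔx.ne'
  simp
  field_simp
  ring
end
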